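/- Fix n ≥ 1 and ε > 0. Let θ : ℝⁿ × ℝ → ℝ be smooth with ε·∂_z²θ + Σᵢ₌₁ⁿ ∂ᵢ²θ = 0 everywhere (i.e. Δ_ε θ = 0). Let I ⊆ ℝ be an open interval and h : ℝⁿ × I → ℝ a smooth function such that for all (x,t): θ(x, h(x,t)) = t and ∂_zθ(x, h(x,t)) > 0. Define ρ : ℝⁿ × I → ℝ by ρ(x,t) = ε·∂_zθ(x,h(x,t)) + [Σᵢ (∂ᵢθ(x,h(x,t)))²] / ∂_zθ(x,h(x,t)). Then ∂ρ/∂t (x,t) = Σᵢ₌₁ⁿ ∂²h/∂xᵢ² (x,t) for all (x,t) ∈ ℝⁿ × I; equivalently ∂ₜρₜ = −Δ_X hₜ for the positive Laplacian Δ_X = −Σᵢ ∂ᵢ². -/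

import Mathlib

/-!
Write subscripts for partial derivatives, with those of `θ` taken at `(x, h (x, t))`.
Differentiating the level-set identity `θ (x, h (x, t)) = t` gives `h_t θ_z = 1` and
`θ_i + h_i θ_z = 0`. Since both hold on an open set, the second can be differentiated once more
in `x_i`, which with symmetry of second derivatives (`pdz_pdx`) yields
`h_ii = -θ_ii / θ_z + 2 θ_i θ_iz / θ_z² - θ_i² θ_zz / θ_z³`.
On the other side, the chain rule along `τ ↦ (x, h (x, τ))` gives
`ρ_t = h_t (ε θ_zz + 2 ∑ θ_i θ_iz / θ_z - ∑ θ_i² θ_zz / θ_z²)` with `h_t = 1 / θ_z`.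
Summing the first formula over `i` and replacing `∑ θ_ii` by `-ε θ_zz` makes the two agree.
All derivatives along the graphs come from the chain rule `hasFDerivAt_comp_graph`.
-/

/-- The `z`-partial derivative of a function on `ℝⁿ × ℝ`. -/
noncomputable def pdz {n : ℕ} (θ : (Fin n → ℝ) × ℝ → ℝ) (p : (Fin n → ℝ) × ℝ) : ℝ :=
  fderiv ℝ θ p (0, 1)

/-- The `xᵢ`-partial derivative of a function on `ℝⁿ × ℝ`. -/
noncomputable def pdx {n : ℕ} (i : Fin n) (θ : (Fin n → ℝ) × ℝ → ℝ)
    (p : (Fin n → ℝ) × ℝ) : ℝ :=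
  fderiv ℝ θ p (Pi.single i 1, 0)

/-- The flux density `ρ(x,t) = ε·∂_zθ + |∇_xθ|²/∂_zθ` evaluated on the level set
`z = h(x,t)` of `θ`. -/
noncomputable def fluxDensity {n : ℕ} (ε : ℝ) (θ h : (Fin n → ℝ) × ℝ → ℝ)
    (x : Fin n → ℝ) (t : ℝ) : ℝ :=
  ε * pdz θ (x, h (x, t)) +
    (∑ i : Fin n, (pdx i θ (x, h (x, t))) ^ 2) / pdz θ (x, h (x, t))

section helpers

variable {n : ℕ}

/-- Chain rule for the restriction `q ↦ g (q.1, h q)` of `g` to the graphs of `h (·, t)`. -/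
lemma hasFDerivAt_comp_graph {g h : (Fin n → ℝ) × ℝ → ℝ} {q : (Fin n → ℝ) × ℝ}
    (hg : DifferentiableAt ℝ g (q.1, h q)) (hh : DifferentiableAt ℝ h q) :
    HasFDerivAt (fun q => g (q.1, h q))
      ((fderiv ℝ g (q.1, h q)).comp ((ContinuousLinearMap.fst ℝ _ _).prod (fderiv ℝ h q))) q :=
  HasFDerivAt.comp (f := fun q : (Fin n → ℝ) × ℝ => (q.1, h q)) q hg.hasFDerivAt
    (hasFDerivAt_fst.prodMk hh.hasFDerivAt)

lemma fderiv_apply_eq_add_pdz (g : (Fin n → ℝ) × ℝ → ℝ) (p : (Fin n → ℝ) × ℝ)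
    (v : Fin n → ℝ) (s : ℝ) :
    fderiv ℝ g p (v, s) = fderiv ℝ g p (v, 0) + s * pdz g p := by
  have hv : ((v, s) : (Fin n → ℝ) × ℝ) = (v, 0) + s • (0, 1) := by simp
  rw [hv, map_add, map_smul, smul_eq_mul, pdz]

lemma pdx_comp_graph {g h : (Fin n → ℝ) × ℝ → ℝ} {q : (Fin n → ℝ) × ℝ} (i : Fin n)
    (hg : DifferentiableAt ℝ g (q.1, h q)) (hh : DifferentiableAt ℝ h q) :
    pdx i (fun q => g (q.1, h q)) q
      = pdx i g (q.1, h q) + pdx i h q * pdz g (q.1, h q) := by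
  rw [pdx, (hasFDerivAt_comp_graph hg hh).fderiv]
  exact fderiv_apply_eq_add_pdz g _ _ _

lemma pdz_comp_graph {g h : (Fin n → ℝ) × ℝ → ℝ} {q : (Fin n → ℝ) × ℝ}
    (hg : DifferentiableAt ℝ g (q.1, h q)) (hh : DifferentiableAt ℝ h q) :
    pdz (fun q => g (q.1, h q)) q = pdz h q * pdz g (q.1, h q) := by
  rw [pdz, (hasFDerivAt_comp_graph hg hh).fderiv]
  refine (fderiv_apply_eq_add_pdz g _ _ _).trans ?_
  have h0 : fderiv ℝ g (q.1, h q) (0, 0) = 0 := map_zero _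
  exact (congrArg (· + _) h0).trans (zero_add _)

lemma hasDerivAt_pdz {g : (Fin n → ℝ) × ℝ → ℝ} {x : Fin n → ℝ} {t : ℝ}
    (hg : DifferentiableAt ℝ g (x, t)) :
    HasDerivAt (fun τ => g (x, τ)) (pdz g (x, t)) t :=
  hg.hasFDerivAt.comp_hasDerivAt (f := fun τ => (x, τ)) t
    ((hasDerivAt_const t x).prodMk (hasDerivAt_id t))

lemma contDiff_pdz {g : (Fin n → ℝ) × ℝ → ℝ} (hg : ContDiff ℝ (⊤ : ℕ∞) g) :
    ContDiff ℝ (⊤ : ℕ∞) (pdz g) :=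
  (hg.fderiv_right (m := (⊤ : ℕ∞)) (by simp)).clm_apply contDiff_const

lemma contDiff_pdx {g : (Fin n → ℝ) × ℝ → ℝ} (i : Fin n) (hg : ContDiff ℝ (⊤ : ℕ∞) g) :
    ContDiff ℝ (⊤ : ℕ∞) (pdx i g) :=
  (hg.fderiv_right (m := (⊤ : ℕ∞)) (by simp)).clm_apply contDiff_const

/-- Equality of mixed partial derivatives. -/
lemma pdz_pdx {g : (Fin n → ℝ) × ℝ → ℝ} (i : Fin n) (hg : ContDiff ℝ (⊤ : ℕ∞) g)
    (p : (Fin n → ℝ) × ℝ) : pdz (pdx i g) p = pdx i (pdz g) p := by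
  have hd : DifferentiableAt ℝ (fderiv ℝ g) p :=
    ((hg.fderiv_right (m := (⊤ : ℕ∞)) (by simp)).differentiable (by simp)) p
  have key : ∀ v w : (Fin n → ℝ) × ℝ,
      fderiv ℝ (fun p => fderiv ℝ g p v) p w = fderiv ℝ (fderiv ℝ g) p w v := by
    intro v w
    rw [fderiv_clm_apply hd (differentiableAt_const v)]
    simp
  have hs : IsSymmSndFDerivAt ℝ g p :=
    hg.contDiffAt.isSymmSndFDerivAt
      (by simpa using WithTop.coe_le_coe.2 (le_top : (2 : ℕ∞) ≤ ⊤))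
  exact (key _ _).trans ((hs _ _).trans (key _ _).symm)

end helpers

/-- If `Δ_ε θ = 0` and the level sets `{θ = t}` are graphs `z = h(x,t)` with `∂_zθ > 0`,
then the flux density satisfies `∂ρ/∂t = Σᵢ ∂²h/∂xᵢ²`, i.e. `∂ₜρₜ = −Δ_X hₜ`. -/
theorem flux_density_evolution {n : ℕ} (hn : 1 ≤ n) (ε : ℝ) (hε : 0 < ε)
    (θ : (Fin n → ℝ) × ℝ → ℝ) (hθ : ContDiff ℝ (⊤ : ℕ∞) θ)
    (hθeq : ∀ p : (Fin n → ℝ) × ℝ, ε * pdz (pdz θ) p + ∑ i : Fin n, pdx i (pdx i θ) p = 0)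
    (a b : ℝ) (hab : a < b)
    (h : (Fin n → ℝ) × ℝ → ℝ)
    (hh : ContDiffOn ℝ (⊤ : ℕ∞) h (Set.univ ×ˢ Set.Ioo a b))
    (hlevel : ∀ x : Fin n → ℝ, ∀ t ∈ Set.Ioo a b, θ (x, h (x, t)) = t)
    (hpos : ∀ x : Fin n → ℝ, ∀ t ∈ Set.Ioo a b, 0 < pdz θ (x, h (x, t))) :
    ∀ x : Fin n → ℝ, ∀ t ∈ Set.Ioo a b,
      deriv (fun τ => fluxDensity ε θ h x τ) t = ∑ i : Fin n, pdx i (pdx i h) (x, t) := by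
  have hU : IsOpen ((Set.univ : Set (Fin n → ℝ)) ×ˢ Set.Ioo a b) := isOpen_univ.prod isOpen_Ioo
  have dh : ∀ q ∈ (Set.univ : Set (Fin n → ℝ)) ×ˢ Set.Ioo a b, DifferentiableAt ℝ h q :=
    fun q hq => (hh.contDiffAt (hU.mem_nhds hq)).differentiableAt (by simp)
  have cz := contDiff_pdz hθ
  have cx := fun i => contDiff_pdx i hθ
  have dθ : Differentiable ℝ θ := hθ.differentiable (by simp)
  have dz : Differentiable ℝ (pdz θ) := cz.differentiable (by simp)
  have dx : ∀ i, Differentiable ℝ (pdx i θ) := fun i => (cx i).differentiable (by simp)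
  have hfd : ∀ q ∈ (Set.univ : Set (Fin n → ℝ)) ×ˢ Set.Ioo a b,
      fderiv ℝ (fun q => θ (q.1, h q)) q = ContinuousLinearMap.snd ℝ _ _ := by
    intro q hq
    have he : (fun q => θ (q.1, h q)) =ᶠ[nhds q] Prod.snd := by
      filter_upwards [hU.mem_nhds hq] with r hr using hlevel r.1 r.2 hr.2
    rw [he.fderiv_eq, fderiv_snd]
  -- Differentiating `θ (x, h (x, t)) = t` in `t` and in `xᵢ`.
  have ht : ∀ q ∈ (Set.univ : Set (Fin n → ℝ)) ×ˢ Set.Ioo a b,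
      pdz h q * pdz θ (q.1, h q) = 1 := by
    intro q hq
    rw [← pdz_comp_graph (dθ _) (dh q hq), pdz, hfd q hq]
    rfl
  have hx : ∀ i, ∀ q ∈ (Set.univ : Set (Fin n → ℝ)) ×ˢ Set.Ioo a b,
      pdx i θ (q.1, h q) + pdx i h q * pdz θ (q.1, h q) = 0 := by
    intro i q hq
    rw [← pdx_comp_graph i (dθ _) (dh q hq), pdx, hfd q hq]
    rfl
  intro x t htI
  have hq : (x, t) ∈ (Set.univ : Set (Fin n → ℝ)) ×ˢ Set.Ioo a b := ⟨trivial, htI⟩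
  have hZ : pdz θ (x, h (x, t)) ≠ 0 := (hpos x t htI).ne'
  have ht0 := ht _ hq
  have hx0 := fun i => hx i _ hq
  have D : ∀ g : (Fin n → ℝ) × ℝ → ℝ, Differentiable ℝ g →
      DifferentiableAt ℝ (fun q : (Fin n → ℝ) × ℝ => g (q.1, h q)) (x, t) :=
    fun g hg => (hasFDerivAt_comp_graph (hg _) (dh _ hq)).differentiableAt
  have T : ∀ g : (Fin n → ℝ) × ℝ → ℝ, Differentiable ℝ g →
      HasDerivAt (fun τ => g (x, h (x, τ))) (pdz h (x, t) * pdz g (x, h (x, t))) t := by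
    intro g hg
    rw [← pdz_comp_graph (q := (x, t)) (hg _) (dh _ hq)]
    exact hasDerivAt_pdz (D g hg)
  -- Differentiating `θᵢ + hᵢ θ_z = 0` once more in `xᵢ`.
  have hxx : ∀ i, pdx i (pdx i θ) (x, h (x, t)) + pdx i h (x, t) * pdz (pdx i θ) (x, h (x, t))
      + pdx i h (x, t) * (pdx i (pdz θ) (x, h (x, t))
        + pdx i h (x, t) * pdz (pdz θ) (x, h (x, t)))
      + pdx i (pdx i h) (x, t) * pdz θ (x, h (x, t)) = 0 := by
    intro i
    have dhi : DifferentiableAt ℝ (pdx i h) (x, t) :=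
      (((hh.contDiffAt (hU.mem_nhds hq)).fderiv_right (m := (⊤ : ℕ∞)) (by simp)).clm_apply
        contDiffAt_const).differentiableAt (by simp)
    have hA := (D _ (dx i)).hasFDerivAt.add (dhi.hasFDerivAt.mul (D _ dz).hasFDerivAt)
    have he : ((fun q : (Fin n → ℝ) × ℝ => pdx i θ (q.1, h q))
        + pdx i h * fun q : (Fin n → ℝ) × ℝ => pdz θ (q.1, h q))
        =ᶠ[nhds (x, t)] fun _ => (0 : ℝ) := by
      filter_upwards [hU.mem_nhds hq] with r hr using hx i r hr
    have h0 := hA.fderiv.symm.trans (he.fderiv_eq.trans (fderiv_const_apply 0))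
    have h1 := congrArg (fun L => L (Pi.single i 1, 0)) h0
    have e1 := pdx_comp_graph (q := (x, t)) i (dx i _) (dh _ hq)
    have e2 := pdx_comp_graph (q := (x, t)) i (dz _) (dh _ hq)
    have h2 : pdx i (fun q => pdx i θ (q.1, h q)) (x, t)
        + (pdx i h (x, t) * pdx i (fun q => pdz θ (q.1, h q)) (x, t)
          + pdz θ (x, h (x, t)) * pdx i (pdx i h) (x, t)) = 0 := h1
    rw [e1, e2] at h2
    linarith
  have hρ : HasDerivAt (fun τ => fluxDensity ε θ h x τ) _ t :=
    ((T _ dz).const_mul ε).add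
      ((HasDerivAt.fun_sum fun i (_ : i ∈ Finset.univ) => (T _ (dx i)).pow 2).div (T _ dz) hZ)
  rw [hρ.deriv]
  have hterm : ∀ i, pdx i (pdx i h) (x, t) = -pdx i (pdx i θ) (x, h (x, t)) / pdz θ (x, h (x, t))
      + 2 * pdx i θ (x, h (x, t)) * pdz (pdx i θ) (x, h (x, t)) / pdz θ (x, h (x, t)) ^ 2
      - pdx i θ (x, h (x, t)) ^ 2 * (pdz (pdz θ) (x, h (x, t)) / pdz θ (x, h (x, t)) ^ 3) := by
    intro i
    have hi : pdx i h (x, t) = -pdx i θ (x, h (x, t)) / pdz θ (x, h (x, t)) := by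
      rw [eq_div_iff hZ]; linarith [hx0 i]
    have h1 := hxx i
    rw [← pdz_pdx i hθ, hi] at h1
    field_simp at h1 ⊢
    linarith
  have ht1 : pdz h (x, t) = 1 / pdz θ (x, h (x, t)) := by rw [eq_div_iff hZ]; exact ht0
  rw [Finset.sum_congr rfl fun i _ => hterm i, Finset.sum_sub_distrib, Finset.sum_add_distrib,
    ← Finset.sum_mul, ← Finset.sum_div, ← Finset.sum_div, Finset.sum_neg_distrib]
  have hS : ∑ i, pdx i (pdx i θ) (x, h (x, t)) = -(ε * pdz (pdz θ) (x, h (x, t))) := by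
    linarith [hθeq (x, h (x, t))]
  have hM : ∑ i, ((2 : ℕ) : ℝ) * pdx i θ (x, h (x, t)) ^ (2 - 1)
        * (pdz h (x, t) * pdz (pdx i θ) (x, h (x, t)))
      = pdz h (x, t) * ∑ i, 2 * pdx i θ (x, h (x, t)) * pdz (pdx i θ) (x, h (x, t)) := by
    rw [Finset.mul_sum]
    refine Finset.sum_congr rfl fun i _ => ?_
    push_cast
    ring
  simp only [Pi.pow_apply]
  rw [hS, hM, ht1]
  field_simp
  ring
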